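/- arXiv:2410.23170 — 3 statements merged into one kernel-verified Lean document; each statement's English description precedes it below -/
import Mathlib

section
/- Let g : ℝ^d → ℝ be continuously differentiable, and let λ > 0 and C > 0 satisfy ‖∇g(x)‖ ≥ C for every x ∈ ℝ^d with g(x) ≥ 0. Let z : [0,∞) → ℝ^d be differentiable and suppose that z'(t) = −λ ∇g(z(t))/‖∇g(z(t))‖ for every t ≥ 0 at which g(z(t)) ≥ 0. Then there exists t₀ with 0 ≤ t₀ ≤ max(g(z(0)), 0)/(λ C) such that g(z(t)) ≤ 0 for all t ≥ t₀. -/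
/-- Theorem 5.1: under the normalized inward-gradient velocity on `{g ≥ 0}` and the
lower bound `‖∇g‖ ≥ C` there, the trajectory enters `Ω = {g ≤ 0}` within time
`max (g (z 0)) 0 / (λ C)` and remains there. -/
theorem stmt_4 {d : ℕ} (g : EuclideanSpace ℝ (Fin d) → ℝ) (hg : ContDiff ℝ 1 g)
    (lam C : ℝ) (hlam : 0 < lam) (hC : 0 < C)
    (hgrad : ∀ x, 0 ≤ g x → C ≤ ‖gradient g x‖)
    (z : ℝ → EuclideanSpace ℝ (Fin d)) (z' : ℝ → EuclideanSpace ℝ (Fin d))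
    (hz : ∀ t ≥ (0 : ℝ), HasDerivWithinAt z (z' t) (Set.Ici 0) t)
    (hz' : ∀ t ≥ (0 : ℝ), 0 ≤ g (z t) →
      z' t = (-lam / ‖gradient g (z t)‖) • gradient g (z t)) :
    ∃ t₀ : ℝ, 0 ≤ t₀ ∧ t₀ ≤ max (g (z 0)) 0 / (lam * C) ∧ ∀ t ≥ t₀, g (z t) ≤ 0 := by
  have hder : ∀ t ≥ (0 : ℝ), HasDerivWithinAt (fun t => g (z t))
      (inner ℝ (gradient g (z t)) (z' t)) (Set.Ici 0) t := by
    intro t ht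
    have h1 : HasGradientAt g (gradient g (z t)) (z t) :=
      ((hg.differentiable (by norm_num)) (z t)).hasGradientAt
    have h2 := h1.hasFDerivAt.comp_hasDerivWithinAt t (hz t ht)
    simpa [Function.comp_def] using h2
  have hneg : ∀ t ≥ (0 : ℝ), 0 ≤ g (z t) →
      inner ℝ (gradient g (z t)) (z' t) ≤ -(lam * C) := by
    intro t ht h0
    have hc := hgrad _ h0
    have hpos : 0 < ‖gradient g (z t)‖ := lt_of_lt_of_le hC hc
    rw [hz' t ht h0, inner_smul_right, real_inner_self_eq_norm_sq]
    have : -lam / ‖gradient g (z t)‖ * ‖gradient g (z t)‖ ^ 2 = -lam * ‖gradient g (z t)‖ := by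
      field_simp
    rw [this]
    nlinarith
  have hcont : ∀ a b : ℝ, 0 ≤ a → ContinuousOn (fun t => g (z t)) (Set.Icc a b) := by
    intro a b ha x hx
    exact ((hder x (ha.trans hx.1)).continuousWithinAt).mono
      (fun y hy => ha.trans hy.1)
  have hright : ∀ t ≥ (0 : ℝ), HasDerivWithinAt (fun t => g (z t))
      (inner ℝ (gradient g (z t)) (z' t)) (Set.Ici t) t := fun t ht =>
    (hder t ht).mono (Set.Ici_subset_Ici.2 ht)
  have hLC : 0 < lam * C := mul_pos hlam hC
  have hinv : ∀ s t : ℝ, 0 ≤ s → s ≤ t → g (z s) ≤ 0 → g (z t) ≤ 0 := by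
    intro s t hs hst h
    exact image_le_of_deriv_right_lt_deriv_boundary (hcont s t hs)
      (fun x hx => hright x (hs.trans hx.1)) (B := fun _ => 0) (B' := fun _ => 0) h
      (fun x => hasDerivAt_const x 0)
      (fun x hx hx0 => by
        have := hneg x (hs.trans hx.1) (le_of_eq hx0.symm)
        linarith) ⟨hst, le_rfl⟩
  have hT : 0 ≤ max (g (z 0)) 0 / (lam * C) := div_nonneg (le_max_right _ _) hLC.le
  refine ⟨_, hT, le_rfl, fun t ht => hinv _ t hT ht ?_⟩
  by_contra hcon
  have hp : ∀ s, 0 ≤ s → s ≤ max (g (z 0)) 0 / (lam * C) → 0 ≤ g (z s) := by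
    intro s hs hs'
    by_contra h
    exact hcon (hinv s _ hs hs' (not_le.1 h).le)
  have hB : ∀ x, HasDerivAt (fun x : ℝ => g (z 0) + -(lam * C) * x) (-(lam * C)) x := by
    intro x
    simpa using ((hasDerivAt_id x).const_mul (-(lam * C))).const_add (g (z 0))
  have key := image_le_of_deriv_right_le_deriv_boundary (hcont 0 (max (g (z 0)) 0 / (lam * C)) le_rfl)
      (fun x hx => hright x hx.1) (B := fun x : ℝ => g (z 0) + -(lam * C) * x)
      (B' := fun _ => -(lam * C)) (by simp)
      (fun x _ => (hB x).continuousAt.continuousWithinAt)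
      (fun x _ => (hB x).hasDerivWithinAt)
      (fun x hx => hneg x hx.1 (hp x hx.1 hx.2.le)) ⟨hT, le_rfl⟩
  have e : -(lam * C) * (max (g (z 0)) 0 / (lam * C)) = -max (g (z 0)) 0 := by
    rw [neg_mul, mul_div_cancel₀ _ hLC.ne']
  have key2 : g (z (max (g (z 0)) 0 / (lam * C))) ≤
      g (z 0) + -(lam * C) * (max (g (z 0)) 0 / (lam * C)) := key
  rw [e] at key2
  have := le_max_left (g (z 0)) 0
  exact hcon (by linarith)
end

section
/- For every ε > 0 there exists a continuous function v : ℝ → ℝ with v(−1) ≥ 0 and v(1) ≤ 0 such that ∫_{−1}^{1} exp(−(x − 1/2)²/2) · (v(x) + 1/2)² dx < ε. -/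
/-- Example 4.2 (infimum is zero): for every `ε > 0` there is a continuous `v` with
`v (-1) ≥ 0` and `v 1 ≤ 0` whose weighted squared deviation from `-1/2` is below `ε`. -/
theorem stmt_6 :
    ∀ ε > (0 : ℝ), ∃ v : ℝ → ℝ, Continuous v ∧ 0 ≤ v (-1) ∧ v 1 ≤ 0 ∧
      (∫ x in (-1 : ℝ)..1, Real.exp (-(x - 1 / 2) ^ 2 / 2) * (v x + 1 / 2) ^ 2) < ε := by
  intro ε hε
  refine ⟨fun x => -1/2 + 1/2 * Real.exp (-(x+1)/ε), by fun_prop, by norm_num, ?_, ?_⟩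
  · have : Real.exp (-((1:ℝ)+1)/ε) ≤ 1 := by
      apply Real.exp_le_one_iff.2
      exact div_nonpos_of_nonpos_of_nonneg (by norm_num) hε.le
    show -1/2 + 1/2 * Real.exp (-((1:ℝ)+1)/ε) ≤ 0
    linarith
  · have hF : ∫ x in (-1 : ℝ)..1, 1/4 * Real.exp (-2*(x+1)/ε)
        = (-ε/8 * Real.exp (-2*((1:ℝ)+1)/ε)) - (-ε/8 * Real.exp (-2*((-1:ℝ)+1)/ε)) := by
      apply intervalIntegral.integral_eq_sub_of_hasDerivAt
        (f := fun x => -ε/8 * Real.exp (-2*(x+1)/ε))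
      · intro x _
        have h1 : HasDerivAt (fun x : ℝ => -2*(x+1)/ε) (-2*1/ε) x :=
          (((hasDerivAt_id x).add_const 1).const_mul (-2)).div_const ε
        refine (h1.exp.const_mul (-ε/8)).congr_deriv ?_
        have he : ε * ε⁻¹ = 1 := mul_inv_cancel₀ hε.ne'
        simp only [div_eq_mul_inv]
        linear_combination (1/4 * Real.exp (-2*(x+1)*ε⁻¹)) * he
      · exact Continuous.intervalIntegrable (by fun_prop) _ _
    have hle : (∫ x in (-1 : ℝ)..1, Real.exp (-(x - 1 / 2) ^ 2 / 2) *
        ((-1/2 + 1/2 * Real.exp (-(x+1)/ε)) + 1 / 2) ^ 2)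
        ≤ ∫ x in (-1 : ℝ)..1, 1/4 * Real.exp (-2*(x+1)/ε) := by
      apply intervalIntegral.integral_mono_on (by norm_num)
      · exact Continuous.intervalIntegrable (by fun_prop) _ _
      · exact Continuous.intervalIntegrable (by fun_prop) _ _
      · intro x _
        have h1 : Real.exp (-(x - 1 / 2) ^ 2 / 2) ≤ 1 := by
          apply Real.exp_le_one_iff.2
          nlinarith [sq_nonneg (x - 1/2)]
        have h2 : ((-1/2 + 1/2 * Real.exp (-(x+1)/ε)) + 1 / 2) ^ 2
            = 1/4 * Real.exp (-2*(x+1)/ε) := by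
          have : Real.exp (-2*(x+1)/ε) = Real.exp (-(x+1)/ε) * Real.exp (-(x+1)/ε) := by
            rw [← Real.exp_add]; congr 1; ring
          rw [this]; ring
        rw [h2]
        exact mul_le_of_le_one_left (by positivity) h1
    refine lt_of_le_of_lt hle ?_
    rw [hF]
    have := mul_pos hε (Real.exp_pos (-2*((1:ℝ)+1)/ε))
    norm_num at this ⊢
    linarith
end

section
/- For every continuous function v : ℝ → ℝ with v(−1) ≥ 0 and v(1) ≤ 0, one has ∫_{−1}^{1} exp(−(x − 1/2)²/2) · (v(x) + 1/2)² dx > 0. -/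
/-- Example 4.2 (no continuous minimizer): every continuous `v` with `v (-1) ≥ 0` and
`v 1 ≤ 0` has strictly positive weighted squared deviation from `-1/2`. -/
theorem stmt_7 (v : ℝ → ℝ) (hv : Continuous v) (hm : 0 ≤ v (-1)) (hp : v 1 ≤ 0) :
    0 < ∫ x in (-1 : ℝ)..1, Real.exp (-(x - 1 / 2) ^ 2 / 2) * (v x + 1 / 2) ^ 2 := by
  apply intervalIntegral.integral_pos (by norm_num)
  · exact Continuous.continuousOn (by fun_prop)
  · intro x _
    positivity
  · refine ⟨-1, by norm_num, ?_⟩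
    have h : 0 < v (-1) + 1 / 2 := by linarith
    positivity
end
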